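/- Let θ : 𝕋ⁿ → ℝⁿ be C¹ with sup_x |∂_x θ(x)| ≤ 0.99 (Hilbert–Schmidt norm of the Jacobian). Define Θ(τ,x) = τ e^{−(1−τ)⟨D_x⟩} θ(x) for τ ∈ [0,1], where e^{−t⟨D_x⟩} is the Fourier multiplier with symbol e^{−t⟨ξ⟩}, ⟨ξ⟩ = (1+|ξ|²)^{1/2}. Then for every τ ∈ [0,1], sup_x |∂_x Θ(τ,x)| ≤ sup_x |∂_x θ(x)| ≤ 0.99, and consequently for each τ the map x ↦ x + Θ(τ,x) is a C¹ diffeomorphism of 𝕋ⁿ. -/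

import Mathlib

/-- Partial derivative of a scalar function on ℝⁿ. -/
noncomputable def pd {n : ℕ} (f : (Fin n → ℝ) → ℝ) (i : Fin n) (x : Fin n → ℝ) : ℝ :=
  deriv (fun s => f (Function.update x i s)) (x i)

/-!
The real part `u` of `e^{-t⟨D⟩} f` solves the modified Helmholtz equation `(∂_t² + Δ_x) u = u` on
the half-space `t ≥ 0`, is periodic in `x` and decays as `t → ∞`. At a positive interior maximum
both second-order terms would be nonpositive, so a nonnegative upper bound for `u` at `t = 0`
persists for `t ≥ 0`; it is enough to check this on trigonometric polynomials, which converge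
uniformly to `f`.

The Fourier series of `∂f` need not converge absolutely, so the gradient is reached through
difference quotients: they commute with the multiplier and, `∂f` being uniformly continuous,
converge uniformly. Applied to all linear combinations of the entries of the Jacobian, the scalar
bound gives the Hilbert–Schmidt bound by duality. Finally, a perturbation of the identity by a map
with derivative of Euclidean norm at most `K < 1` is a diffeomorphism.
-/

open Filter Topology Set
open scoped Real NNReal

section Calculus

theorem deriv_deriv_nonpos_of_isLocalMax {f : ℝ → ℝ} {x : ℝ} (hf : ContinuousAt f x)
    (hmax : IsLocalMax f x) : deriv (deriv f) x ≤ 0 := by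
  by_contra! hpos
  have hmin : IsLocalMin f x := isLocalMin_of_deriv_deriv_pos hpos hmax.deriv_eq_zero hf
  have hconst : f =ᶠ[𝓝 x] fun _ => f x := by
    filter_upwards [hmax, hmin] with y hle hge using le_antisymm hle hge
  have hzero : deriv f =ᶠ[𝓝 x] fun _ => 0 := by simpa using hconst.deriv
  exact hpos.ne' (by simpa using hzero.deriv_eq)

theorem hasDerivAt_re_sum_mul_cexp {κ : Type*} (S : Finset κ) (c z : κ → ℂ) (r : ℝ) :
    HasDerivAt (fun r : ℝ => (∑ k ∈ S, c k * Complex.exp (r * z k)).re)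
      (∑ k ∈ S, c k * z k * Complex.exp (r * z k)).re r := by
  refine Complex.reCLM.hasFDerivAt.comp_hasDerivAt r (HasDerivAt.fun_sum fun k _ => ?_)
  have hlin : HasDerivAt (fun r : ℝ => (r : ℂ) * z k) (z k) r := by
    simpa using (Complex.ofRealCLM.hasDerivAt (x := r)).mul_const (z k)
  exact (hlin.cexp.const_mul (c k)).congr_deriv (by ring)

theorem deriv_deriv_re_sum_mul_cexp {κ : Type*} (S : Finset κ) (c z : κ → ℂ) (r : ℝ) :
    deriv (deriv fun r : ℝ => (∑ k ∈ S, c k * Complex.exp (r * z k)).re) r =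
      (∑ k ∈ S, c k * z k * z k * Complex.exp (r * z k)).re := by
  rw [funext fun r => (hasDerivAt_re_sum_mul_cexp S c z r).deriv]
  exact (hasDerivAt_re_sum_mul_cexp S (fun k => c k * z k) z r).deriv

theorem tendstoUniformly_finsetSum {α β κ G : Type*} [UniformSpace G] [AddCommGroup G]
    [IsUniformAddGroup G] {l : Filter α} (S : Finset κ) {F : κ → α → β → G} {f : κ → β → G}
    (h : ∀ k ∈ S, TendstoUniformly (F k) (f k) l) :
    TendstoUniformly (∑ k ∈ S, F k) (∑ k ∈ S, f k) l := by
  classical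
  induction S using Finset.induction_on with
  | empty => exact fun u hu => Eventually.of_forall fun _ _ => refl_mem_uniformity hu
  | insert k S hk ih =>
    rw [Finset.sum_insert hk, Finset.sum_insert hk]
    exact (h k (Finset.mem_insert_self k S)).add
      (ih fun j hj => h j (Finset.mem_insert_of_mem hj))

theorem tendstoUniformly_differenceQuotient {E F : Type*} [NormedAddCommGroup E] [NormedSpace ℝ E]
    [NormedAddCommGroup F] [NormedSpace ℝ F] {f : E → F} (hf : Differentiable ℝ f)
    (hf' : UniformContinuous (fderiv ℝ f)) (v : E) :
    TendstoUniformly (fun (h : ℝ) x => h⁻¹ • (f (x + h • v) - f x)) (fun x => fderiv ℝ f x v)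
      (𝓝[≠] 0) := by
  rw [Metric.tendstoUniformly_iff]
  intro ε hε
  set η := ε / (‖v‖ + 1)
  have hη : 0 < η := by positivity
  obtain ⟨δ, hδ, hclose⟩ := Metric.uniformContinuous_iff.1 hf' η hη
  have hsmall : ∀ᶠ h : ℝ in 𝓝[≠] 0, ‖h • v‖ < δ :=
    ((by fun_prop : Continuous fun h : ℝ => ‖h • v‖).tendsto' 0 0 (by simp)).eventually_lt_const hδ
      |>.filter_mono nhdsWithin_le_nhds
  filter_upwards [hsmall, self_mem_nhdsWithin] with h hh hne x
  have hmean : ‖f (x + h • v) - f x - fderiv ℝ f x (h • v)‖ ≤ η * ‖h • v‖ := by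
    have := (convex_ball x δ).norm_image_sub_le_of_norm_fderiv_le' (fun y _ => hf y)
      (fun y hy => by simpa [dist_eq_norm] using (hclose hy).le) (Metric.mem_ball_self hδ)
      (show x + h • v ∈ Metric.ball x δ by simpa using hh)
    simpa using this
  have hquot : h⁻¹ • (f (x + h • v) - f x) - fderiv ℝ f x v =
      h⁻¹ • (f (x + h • v) - f x - fderiv ℝ f x (h • v)) := by
    rw [smul_sub _ (f (x + h • v) - f x), map_smul, inv_smul_smul₀ hne]
  calc dist (fderiv ℝ f x v) (h⁻¹ • (f (x + h • v) - f x))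
      = |h|⁻¹ * ‖f (x + h • v) - f x - fderiv ℝ f x (h • v)‖ := by
        rw [dist_comm, dist_eq_norm, hquot, norm_smul, norm_inv, Real.norm_eq_abs]
    _ ≤ |h|⁻¹ * (η * (|h| * ‖v‖)) := by gcongr; simpa [norm_smul] using hmean
    _ = η * ‖v‖ := by field_simp [abs_ne_zero.2 hne]
    _ < η * (‖v‖ + 1) := by gcongr; exact lt_add_one _
    _ = ε := div_mul_cancel₀ _ (by positivity)

end Calculus

section Periodic

variable {ι : Type*}

/-- A function on `ι → ℝ` that descends to the torus `(ℝ / 2πℤ)^ι`. -/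
def TorusPeriodic {α : Type*} (f : (ι → ℝ) → α) : Prop :=
  ∀ k : ι → ℤ, Function.Periodic f fun i => 2 * π * k i

theorem exists_add_two_pi_mul_mem_Icc (x : ι → ℝ) :
    ∃ k : ι → ℤ, (x + fun i => 2 * π * k i) ∈ Icc (0 : ι → ℝ) fun _ => 2 * π := by
  have hmod : ∀ i, x i + 2 * π * ↑(-toIcoDiv Real.two_pi_pos 0 (x i)) =
      toIcoMod Real.two_pi_pos 0 (x i) := fun i => by
    rw [← self_sub_toIcoDiv_zsmul, zsmul_eq_mul]
    push_cast
    ring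
  have hmem := fun i => toIcoMod_mem_Ico Real.two_pi_pos 0 (x i)
  refine ⟨fun i => -toIcoDiv Real.two_pi_pos 0 (x i), fun i => ?_, fun i => ?_⟩
  · exact (hmem i).1.trans_eq (hmod i).symm
  · exact (hmod i).trans_le (by simpa using (hmem i).2.le)

theorem TorusPeriodic.fderiv [Finite ι] {F : Type*} [NormedAddCommGroup F] [NormedSpace ℝ F]
    {f : (ι → ℝ) → F} (hf : TorusPeriodic f) : TorusPeriodic (fderiv ℝ f) := fun k x => by
  cases nonempty_fintype ι
  rw [← fderiv_comp_add_right, (hf k).funext]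

theorem TorusPeriodic.uniformContinuous [Finite ι] {α : Type*} [UniformSpace α]
    {f : (ι → ℝ) → α} (hper : TorusPeriodic f) (hf : Continuous f) : UniformContinuous f := by
  cases nonempty_fintype ι
  intro r hr
  have hcpt : IsCompact (Icc (0 : ι → ℝ) fun _ => 2 * π) := isCompact_Icc
  obtain ⟨δ, hδ, hclose⟩ := Metric.mem_uniformity_dist.1
    (hcpt.uniformContinuousAt_of_continuousAt f (fun _ _ => hf.continuousAt) hr)
  refine Metric.mem_uniformity_dist.2 ⟨δ, hδ, fun {x y} hxy => ?_⟩
  obtain ⟨k, hk⟩ := exists_add_two_pi_mul_mem_Icc x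
  change (f x, f y) ∈ r
  rw [← hper k x, ← hper k y]
  exact hclose ((dist_add_right x y _).trans_lt hxy) hk

theorem exists_isMaxOn_of_torusPeriodic {u : ℝ → (ι → ℝ) → ℝ}
    (hcont : Continuous fun p : ℝ × (ι → ℝ) => u p.1 p.2) (hper : ∀ t, TorusPeriodic (u t))
    {T : ℝ} (hT : 0 ≤ T) :
    ∃ t ∈ Icc 0 T, ∃ x, ∀ s ∈ Icc 0 T, ∀ y, u s y ≤ u t x := by
  have hcpt : IsCompact (Icc 0 T ×ˢ Icc (0 : ι → ℝ) fun _ => 2 * π) :=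
    isCompact_Icc.prod isCompact_Icc
  obtain ⟨k₀, hk₀⟩ := exists_add_two_pi_mul_mem_Icc (0 : ι → ℝ)
  obtain ⟨⟨t, x⟩, htx, hmax⟩ := hcpt.exists_isMaxOn ⟨(0, _), left_mem_Icc.2 hT, hk₀⟩
    hcont.continuousOn
  refine ⟨t, htx.1, x, fun s hs y => ?_⟩
  obtain ⟨k, hk⟩ := exists_add_two_pi_mul_mem_Icc y
  exact (hper s k y).symm.trans_le (isMaxOn_iff.1 hmax (s, _) ⟨hs, hk⟩)

end Periodic

section MaximumPrinciple

variable {ι : Type*} [Fintype ι] [DecidableEq ι]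

theorem nonpos_of_isLocalMax_of_le_deriv_deriv {u : ℝ → (ι → ℝ) → ℝ} {t : ℝ} {x : ι → ℝ}
    (hcont : Continuous fun p : ℝ × (ι → ℝ) => u p.1 p.2)
    (hmax : IsLocalMax (fun p : ℝ × (ι → ℝ) => u p.1 p.2) (t, x))
    (heq : u t x ≤ deriv (deriv fun r : ℝ => u r x) t +
      ∑ i, deriv (deriv fun r : ℝ => u t (x + r • Pi.single i 1)) 0) : u t x ≤ 0 := by
  have htime : deriv (deriv fun r : ℝ => u r x) t ≤ 0 :=
    deriv_deriv_nonpos_of_isLocalMax (hcont.comp (by fun_prop : Continuous (·, x))).continuousAt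
      (hmax.comp_continuous (g := (·, x)) (by fun_prop))
  have hspace : ∀ i, deriv (deriv fun r : ℝ => u t (x + r • Pi.single i 1)) 0 ≤ 0 := fun i => by
    have hline : Continuous fun r : ℝ => (t, x + r • (Pi.single i 1 : ι → ℝ)) := by fun_prop
    refine deriv_deriv_nonpos_of_isLocalMax (hcont.comp hline).continuousAt
      (IsLocalMax.comp_continuous (f := fun p : ℝ × (ι → ℝ) => u p.1 p.2) ?_ hline.continuousAt)
    simpa using hmax
  exact heq.trans (add_nonpos htime (Finset.sum_nonpos fun i _ => hspace i))

theorem le_of_forall_zero_le_of_le_deriv_deriv {u : ℝ → (ι → ℝ) → ℝ}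
    (hcont : Continuous fun p : ℝ × (ι → ℝ) => u p.1 p.2) (hper : ∀ t, TorusPeriodic (u t))
    (hdecay : TendstoUniformly u 0 atTop)
    (heq : ∀ t > 0, ∀ x, u t x ≤ deriv (deriv fun r : ℝ => u r x) t +
      ∑ i, deriv (deriv fun r : ℝ => u t (x + r • Pi.single i 1)) 0)
    {M : ℝ} (hM : 0 ≤ M) (hbd : ∀ x, u 0 x ≤ M) {t : ℝ} (ht : 0 ≤ t) (x : ι → ℝ) :
    u t x ≤ M := by
  by_contra! hlt
  have hpos : 0 < u t x := hM.trans_lt hlt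
  obtain ⟨T, hsmall, htT⟩ := ((Metric.tendstoUniformly_iff.1 hdecay _ hpos).and
    (eventually_gt_atTop t)).exists
  obtain ⟨t₀, ht₀, x₀, hmax⟩ := exists_isMaxOn_of_torusPeriodic hcont hper (ht.trans htT.le)
  have hge : u t x ≤ u t₀ x₀ := hmax t ⟨ht, htT.le⟩ x
  have ht₀_pos : 0 < t₀ := ht₀.1.lt_of_ne (by rintro rfl; exact (hlt.trans_le hge).not_ge (hbd x₀))
  have ht₀_lt : t₀ < T := ht₀.2.lt_of_ne (by
    rintro rfl
    have := (le_abs_self _).trans_lt (by simpa [dist_comm] using hsmall x₀)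
    exact this.not_ge hge)
  have hloc : IsLocalMax (fun p : ℝ × (ι → ℝ) => u p.1 p.2) (t₀, x₀) := by
    filter_upwards [prod_mem_nhds (Icc_mem_nhds ht₀_pos ht₀_lt) univ_mem] with p hp
      using hmax p.1 hp.1 p.2
  exact (hpos.trans_le hge).not_ge
    (nonpos_of_isLocalMax_of_le_deriv_deriv hcont hloc (heq t₀ ht₀_pos x₀))

end MaximumPrinciple

section Fourier

variable {ι : Type*} [Fintype ι]

/-- The pairing `x ↦ ξ · x` of a frequency `ξ ∈ ℤ^ι` with `ℝ^ι`. -/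
noncomputable def phase (ξ : ι → ℤ) : (ι → ℝ) →L[ℝ] ℝ :=
  ∑ i, (ξ i : ℝ) • ContinuousLinearMap.proj i

theorem phase_apply (ξ : ι → ℤ) (x : ι → ℝ) : phase ξ x = ∑ i, (ξ i : ℝ) * x i := by
  simp [phase]

theorem phase_smul_single [DecidableEq ι] (ξ : ι → ℤ) (r : ℝ) (i : ι) :
    phase ξ (r • Pi.single i 1) = r * ξ i := by
  simp [phase_apply, Pi.single_apply]

/-- The character `x ↦ e^{iξ·x}` of the torus `(ℝ / 2πℤ)^ι`. -/
noncomputable def torusChar (ξ : ι → ℤ) (x : ι → ℝ) : ℂ :=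
  Complex.exp (Complex.I * (phase ξ x : ℝ))

theorem norm_torusChar (ξ : ι → ℤ) (x : ι → ℝ) : ‖torusChar ξ x‖ = 1 :=
  Complex.norm_exp_I_mul_ofReal _

theorem torusChar_add (ξ : ι → ℤ) (x y : ι → ℝ) :
    torusChar ξ (x + y) = torusChar ξ x * torusChar ξ y := by
  simp only [torusChar, map_add, Complex.ofReal_add, mul_add, Complex.exp_add]

theorem torusPeriodic_torusChar (ξ : ι → ℤ) : TorusPeriodic (torusChar ξ) := fun k x => by
  have hperiod : torusChar ξ (fun i => 2 * π * k i) = 1 := by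
    refine Complex.exp_eq_one_iff.2 ⟨∑ i, ξ i * k i, ?_⟩
    push_cast [phase_apply, Finset.mul_sum, Finset.sum_mul]
    exact Finset.sum_congr rfl fun i _ => by ring
  rw [torusChar_add, hperiod, mul_one]

theorem continuous_torusChar (ξ : ι → ℤ) : Continuous (torusChar ξ) := by
  unfold torusChar
  fun_prop

/-- The Japanese bracket `⟨ξ⟩ = (1 + |ξ|²)^{1/2}` with the Euclidean length `|ξ|`. -/
noncomputable def japaneseBracket (ξ : ι → ℤ) : ℝ := √(1 + ∑ i, (ξ i : ℝ) ^ 2)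

theorem sq_japaneseBracket (ξ : ι → ℤ) : japaneseBracket ξ ^ 2 = 1 + ∑ i, (ξ i : ℝ) ^ 2 :=
  Real.sq_sqrt (by positivity)

theorem one_le_japaneseBracket (ξ : ι → ℤ) : 1 ≤ japaneseBracket ξ :=
  Real.one_le_sqrt.2 (le_add_of_nonneg_right (by positivity))

/-- The real part of `∑ ξ ∈ S, e^{-t⟨ξ⟩} a_ξ e^{iξ·x}`, the extension to the half-space `t ≥ 0`
of a trigonometric polynomial by a solution of `(∂_t² + Δ_x) u = u`. -/
noncomputable def helmholtzSum (S : Finset (ι → ℤ)) (a : (ι → ℤ) → ℂ) (t : ℝ) (x : ι → ℝ) : ℝ :=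
  (∑ ξ ∈ S, Real.exp (-(t * japaneseBracket ξ)) * a ξ * torusChar ξ x).re

section HelmholtzSum

variable (S : Finset (ι → ℤ)) (a : (ι → ℤ) → ℂ)

theorem continuous_helmholtzSum :
    Continuous fun p : ℝ × (ι → ℝ) => helmholtzSum S a p.1 p.2 := by
  have := continuous_torusChar (ι := ι)
  unfold helmholtzSum
  fun_prop

theorem torusPeriodic_helmholtzSum (t : ℝ) : TorusPeriodic (helmholtzSum S a t) := fun k x => by
  simp only [helmholtzSum, (torusPeriodic_torusChar _ k) x]

theorem abs_helmholtzSum_le {t : ℝ} (ht : 0 ≤ t) (x : ι → ℝ) :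
    |helmholtzSum S a t x| ≤ Real.exp (-t) * ∑ ξ ∈ S, ‖a ξ‖ := by
  refine (Complex.abs_re_le_norm _).trans ((norm_sum_le _ _).trans ?_)
  rw [Finset.mul_sum]
  refine Finset.sum_le_sum fun ξ _ => ?_
  rw [norm_mul, norm_mul, norm_torusChar, mul_one, Complex.norm_real, Real.norm_eq_abs,
    Real.abs_exp]
  gcongr
  exact le_mul_of_one_le_right ht (one_le_japaneseBracket ξ)

theorem tendstoUniformly_helmholtzSum_atTop : TendstoUniformly (helmholtzSum S a) 0 atTop := by
  have hbound : Tendsto (fun t => Real.exp (-t) * ∑ ξ ∈ S, ‖a ξ‖) atTop (𝓝 0) := by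
    simpa using Real.tendsto_exp_neg_atTop_nhds_zero.mul_const (∑ ξ ∈ S, ‖a ξ‖)
  refine Metric.tendstoUniformly_iff.2 fun ε hε => ?_
  filter_upwards [hbound.eventually_lt_const hε, eventually_ge_atTop 0] with t hlt ht x
  simpa using (abs_helmholtzSum_le S a ht x).trans_lt hlt

theorem deriv_deriv_helmholtzSum_time (t : ℝ) (x : ι → ℝ) :
    deriv (deriv fun r : ℝ => helmholtzSum S a r x) t =
      helmholtzSum S (fun ξ => (japaneseBracket ξ ^ 2 : ℝ) * a ξ) t x := by
  have hform : (fun r : ℝ => helmholtzSum S a r x) = fun r : ℝ => (∑ ξ ∈ S,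
      a ξ * torusChar ξ x * Complex.exp (r * (-japaneseBracket ξ : ℝ))).re := by
    funext r
    refine congrArg Complex.re (Finset.sum_congr rfl fun ξ _ => ?_)
    push_cast
    ring_nf
  rw [hform, deriv_deriv_re_sum_mul_cexp]
  refine congrArg Complex.re (Finset.sum_congr rfl fun ξ _ => ?_)
  push_cast
  ring_nf

theorem deriv_deriv_helmholtzSum_space [DecidableEq ι] (t : ℝ) (x : ι → ℝ) (i : ι) :
    deriv (deriv fun r : ℝ => helmholtzSum S a t (x + r • Pi.single i 1)) 0 =
      helmholtzSum S (fun ξ => (-(ξ i : ℝ) ^ 2 : ℝ) * a ξ) t x := by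
  have hform : (fun r : ℝ => helmholtzSum S a t (x + r • Pi.single i 1)) = fun r : ℝ =>
      (∑ ξ ∈ S, Real.exp (-(t * japaneseBracket ξ)) * a ξ * torusChar ξ x *
        Complex.exp (r * (Complex.I * ξ i))).re := by
    funext r
    refine congrArg Complex.re (Finset.sum_congr rfl fun ξ _ => ?_)
    rw [torusChar_add, torusChar.eq_1 ξ (r • _), phase_smul_single]
    push_cast
    ring_nf
  rw [hform, deriv_deriv_re_sum_mul_cexp]
  refine congrArg Complex.re (Finset.sum_congr rfl fun ξ _ => ?_)
  push_cast
  rw [zero_mul, Complex.exp_zero]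
  linear_combination Complex.exp (-(t * japaneseBracket ξ)) * a ξ * torusChar ξ x * ξ i ^ 2 *
    Complex.I_mul_I

theorem helmholtzSum_eq_deriv_deriv [DecidableEq ι] (t : ℝ) (x : ι → ℝ) :
    helmholtzSum S a t x = deriv (deriv fun r : ℝ => helmholtzSum S a r x) t +
      ∑ i, deriv (deriv fun r : ℝ => helmholtzSum S a t (x + r • Pi.single i 1)) 0 := by
  simp only [deriv_deriv_helmholtzSum_time, deriv_deriv_helmholtzSum_space]
  simp only [helmholtzSum, ← Complex.re_sum, ← Complex.add_re]
  rw [Finset.sum_comm, ← Finset.sum_add_distrib]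
  refine congrArg Complex.re (Finset.sum_congr rfl fun ξ _ => ?_)
  simp only [← Finset.sum_mul, ← Finset.mul_sum, sq_japaneseBracket]
  push_cast
  rw [Finset.sum_neg_distrib]
  ring

theorem helmholtzSum_le {M : ℝ} (hM : 0 ≤ M) (hbd : ∀ x, helmholtzSum S a 0 x ≤ M) {t : ℝ}
    (ht : 0 ≤ t) (x : ι → ℝ) : helmholtzSum S a t x ≤ M := by
  classical
  exact le_of_forall_zero_le_of_le_deriv_deriv (continuous_helmholtzSum S a)
    (torusPeriodic_helmholtzSum S a) (tendstoUniformly_helmholtzSum_atTop S a)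
    (fun t _ x => (helmholtzSum_eq_deriv_deriv S a t x).le) hM hbd ht x

end HelmholtzSum

/-- `g` is the image of `f` under the Fourier multiplier with symbol `m`, both functions being
sums of absolutely convergent Fourier series on the torus `(ℝ / 2πℤ)^ι`. -/
def IsFourierMultiplier (m : (ι → ℤ) → ℝ) (f g : (ι → ℝ) → ℝ) : Prop :=
  ∃ a : (ι → ℤ) → ℂ, (∀ x, HasSum (fun ξ => a ξ * torusChar ξ x) (f x : ℂ)) ∧
    ∀ x, HasSum (fun ξ => m ξ * a ξ * torusChar ξ x) (g x : ℂ)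

theorem summable_norm_of_hasSum_torusChar {a : (ι → ℤ) → ℂ} {x : ι → ℝ} {z : ℂ}
    (h : HasSum (fun ξ => a ξ * torusChar ξ x) z) : Summable fun ξ => ‖a ξ‖ := by
  simpa only [norm_mul, norm_torusChar, mul_one] using h.summable.norm

namespace IsFourierMultiplier

variable {m : (ι → ℤ) → ℝ} {f g f' g' : (ι → ℝ) → ℝ}

theorem torusPeriodic (h : IsFourierMultiplier m f g) : TorusPeriodic f := fun k x => by
  obtain ⟨a, hf, -⟩ := h
  have hshift := hf (x + fun i => 2 * π * k i)
  simp only [torusPeriodic_torusChar _ k x] at hshift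
  exact_mod_cast hshift.unique (hf x)

theorem sub (h : IsFourierMultiplier m f g) (h' : IsFourierMultiplier m f' g') :
    IsFourierMultiplier m (f - f') (g - g') := by
  obtain ⟨a, hf, hg⟩ := h
  obtain ⟨a', hf', hg'⟩ := h'
  refine ⟨a - a', fun x => ?_, fun x => ?_⟩
  · simpa [sub_mul] using (hf x).sub (hf' x)
  · simpa [sub_mul, mul_sub] using (hg x).sub (hg' x)

theorem const_smul (h : IsFourierMultiplier m f g) (c : ℝ) :
    IsFourierMultiplier m (c • f) (c • g) := by
  obtain ⟨a, hf, hg⟩ := h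
  refine ⟨(c : ℂ) • a, fun x => ?_, fun x => ?_⟩
  · simpa [mul_assoc] using (hf x).mul_left (c : ℂ)
  · simpa [mul_assoc, mul_left_comm] using (hg x).mul_left (c : ℂ)

theorem sum {κ : Type*} {S : Finset κ} {f g : κ → (ι → ℝ) → ℝ}
    (h : ∀ k ∈ S, IsFourierMultiplier m (f k) (g k)) :
    IsFourierMultiplier m (∑ k ∈ S, f k) (∑ k ∈ S, g k) := by
  choose! a hf hg using h
  refine ⟨∑ k ∈ S, a k, fun x => ?_, fun x => ?_⟩
  · simpa [Finset.sum_mul] using hasSum_sum fun k hk => hf k hk x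
  · simpa [Finset.sum_mul, Finset.mul_sum] using hasSum_sum fun k hk => hg k hk x

theorem comp_add_right (h : IsFourierMultiplier m f g) (v : ι → ℝ) :
    IsFourierMultiplier m (fun x => f (x + v)) fun x => g (x + v) := by
  obtain ⟨a, hf, hg⟩ := h
  refine ⟨fun ξ => a ξ * torusChar ξ v, fun x => ?_, fun x => ?_⟩
  · simpa only [torusChar_add, mul_assoc, mul_comm (torusChar _ v)] using hf (x + v)
  · simpa only [torusChar_add, mul_assoc, mul_comm (torusChar _ v)] using hg (x + v)

end IsFourierMultiplier

/-- The Fourier multiplier with symbol `m` does not increase nonnegative upper bounds. -/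
def IsSubMarkovSymbol (m : (ι → ℤ) → ℝ) : Prop :=
  ∀ ⦃f g⦄, IsFourierMultiplier m f g → ∀ ⦃M : ℝ⦄, 0 ≤ M → (∀ x, f x ≤ M) → ∀ x, g x ≤ M

theorem isSubMarkovSymbol_mul_exp_neg_japaneseBracket {s t : ℝ} (hs : s ∈ Icc (0 : ℝ) 1)
    (ht : 0 ≤ t) :
    IsSubMarkovSymbol fun ξ : ι → ℤ => s * Real.exp (-(t * japaneseBracket ξ)) := by
  rintro f g ⟨a, hf, hg⟩ M hM hbd x
  have ha := summable_norm_of_hasSum_torusChar (hf 0)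
  have hunif : TendstoUniformly (fun S y => ∑ ξ ∈ S, a ξ * torusChar ξ y) (fun y => (f y : ℂ))
      atTop := by
    simpa only [(hf _).tsum_eq] using
      tendstoUniformly_tsum (f := fun ξ y => a ξ * torusChar ξ y) ha fun ξ y =>
        (norm_mul_le _ _).trans_eq (by rw [norm_torusChar, mul_one])
  have hlim : Tendsto (fun S => s * helmholtzSum S a t x) atTop (𝓝 (g x)) := by
    have := Complex.continuous_re.continuousAt.tendsto.comp (hg x)
    simp only [Complex.ofReal_mul, mul_assoc, ← Finset.mul_sum] at this
    simpa [helmholtzSum, mul_assoc, Function.comp_def, -Complex.ofReal_exp] using this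
  refine le_of_forall_pos_le_add fun ε hε => le_of_tendsto hlim ?_
  filter_upwards [Metric.tendstoUniformly_iff.1 hunif ε hε] with S hS
  have hzero : ∀ y, helmholtzSum S a 0 y ≤ M + ε := fun y => by
    have hre := ((Complex.abs_re_le_norm _).trans_lt ((dist_eq_norm_sub' _ _).symm.trans_lt (hS y)))
    simp only [helmholtzSum, zero_mul, neg_zero, Real.exp_zero, Complex.ofReal_one, one_mul]
    rw [Complex.sub_re, Complex.ofReal_re] at hre
    linarith [le_abs_self ((∑ ξ ∈ S, a ξ * torusChar ξ y).re - f y), hbd y]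
  calc s * helmholtzSum S a t x ≤ s * (M + ε) :=
        mul_le_mul_of_nonneg_left (helmholtzSum_le S a (by positivity) hzero ht x) hs.1
    _ ≤ M + ε := mul_le_of_le_one_left (by positivity) hs.2

end Fourier

section Gradient

variable {ι κ : Type*} [Fintype ι]

theorem IsSubMarkovSymbol.sum_fderiv_apply_le {m : (ι → ℤ) → ℝ} (hm : IsSubMarkovSymbol m)
    {S : Finset κ} {f g : κ → (ι → ℝ) → ℝ} {v : κ → ι → ℝ} {x : ι → ℝ} {M : ℝ}
    (hfg : ∀ k ∈ S, IsFourierMultiplier m (f k) (g k)) (hf : ∀ k ∈ S, ContDiff ℝ 1 (f k))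
    (hg : ∀ k ∈ S, DifferentiableAt ℝ (g k) x) (hM : 0 ≤ M)
    (hbd : ∀ y, ∑ k ∈ S, fderiv ℝ (f k) y (v k) ≤ M) :
    ∑ k ∈ S, fderiv ℝ (g k) x (v k) ≤ M := by
  have hquot (h : ℝ) : IsFourierMultiplier m
      (∑ k ∈ S, fun y => h⁻¹ • (f k (y + h • v k) - f k y))
      (∑ k ∈ S, fun y => h⁻¹ • (g k (y + h • v k) - g k y)) :=
    .sum fun k hk => (((hfg k hk).comp_add_right _).sub (hfg k hk)).const_smul _
  have hunif := tendstoUniformly_finsetSum S fun k hk =>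
    tendstoUniformly_differenceQuotient ((hf k hk).differentiable one_ne_zero)
      ((hfg k hk).torusPeriodic.fderiv.uniformContinuous ((hf k hk).continuous_fderiv one_ne_zero))
      (v k)
  have hlim : Tendsto (fun h : ℝ => ∑ k ∈ S, h⁻¹ • (g k (x + h • v k) - g k x)) (𝓝[≠] 0)
      (𝓝 (∑ k ∈ S, fderiv ℝ (g k) x (v k))) :=
    tendsto_finsetSum S fun k hk => (hg k hk).hasFDerivAt.hasLineDerivAt (v k)
      |>.tendsto_slope_zero
  refine le_of_forall_pos_le_add fun ε hε => le_of_tendsto hlim ?_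
  filter_upwards [Metric.tendstoUniformly_iff.1 hunif ε hε] with h hclose
  have hle : ∀ y, (∑ k ∈ S, fun y => h⁻¹ • (f k (y + h • v k) - f k y)) y ≤ M + ε := fun y => by
    have := (abs_lt.1 ((dist_comm _ _).trans_lt (hclose y))).2
    simp only [Finset.sum_apply] at this ⊢
    linarith [hbd y]
  simpa using hm (hquot h) (by positivity) hle x

variable [Fintype κ] [DecidableEq ι]

/-- The Hilbert–Schmidt norm of a linear map between the Euclidean spaces `ℝ^ι` and `ℝ^κ`, modelled
as function types; the norm of `(ι → ℝ) →L[ℝ] (κ → ℝ)` itself is the operator norm for the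
supremum norms. -/
noncomputable def hsNorm (L : (ι → ℝ) →L[ℝ] (κ → ℝ)) : ℝ :=
  √(∑ i, ∑ j, L (Pi.single i 1) j ^ 2)

theorem sum_sum_mul_le_hsNorm_mul_hsNorm (L L' : (ι → ℝ) →L[ℝ] (κ → ℝ)) :
    ∑ i, ∑ j, L (Pi.single i 1) j * L' (Pi.single i 1) j ≤ hsNorm L * hsNorm L' := by
  simpa only [hsNorm, Fintype.sum_prod_type] using
    Real.sum_mul_le_sqrt_mul_sqrt (Finset.univ : Finset (ι × κ))
      (fun p => L (Pi.single p.1 1) p.2) (fun p => L' (Pi.single p.1 1) p.2)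

theorem hsNorm_nonneg (L : (ι → ℝ) →L[ℝ] (κ → ℝ)) : 0 ≤ hsNorm L := Real.sqrt_nonneg _

theorem sq_hsNorm (L : (ι → ℝ) →L[ℝ] (κ → ℝ)) :
    hsNorm L ^ 2 = ∑ i, ∑ j, L (Pi.single i 1) j ^ 2 :=
  Real.sq_sqrt (by positivity)

theorem IsSubMarkovSymbol.hsNorm_fderiv_le {m : (ι → ℤ) → ℝ} (hm : IsSubMarkovSymbol m)
    {f g : (ι → ℝ) → κ → ℝ} {x : ι → ℝ} {M : ℝ}
    (hfg : ∀ j, IsFourierMultiplier m (fun y => f y j) fun y => g y j) (hf : ContDiff ℝ 1 f)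
    (hg : DifferentiableAt ℝ g x) (hM : 0 ≤ M) (hbd : ∀ y, hsNorm (fderiv ℝ f y) ≤ M) :
    hsNorm (fderiv ℝ g x) ≤ M := by
  set L := fderiv ℝ g x
  -- Testing the Jacobian of `f` against `L` turns the norm bound into an upper bound for a scalar.
  have hpair : ∑ p : ι × κ, fderiv ℝ (fun y => g y p.2) x (L (Pi.single p.1 1) p.2 •
      Pi.single p.1 1) ≤ hsNorm L * M := by
    refine hm.sum_fderiv_apply_le (f := fun p y => f y p.2) (fun p _ => hfg p.2)
      (fun p _ => contDiff_pi.1 hf p.2) (fun p _ => differentiableAt_pi.1 hg p.2)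
      (mul_nonneg (hsNorm_nonneg L) hM) fun y => ?_
    calc ∑ p : ι × κ, fderiv ℝ (fun y => f y p.2) y (L (Pi.single p.1 1) p.2 • Pi.single p.1 1)
        = ∑ i, ∑ j, L (Pi.single i 1) j * fderiv ℝ f y (Pi.single i 1) j := by
          simp [Fintype.sum_prod_type, fderiv_apply, hf.differentiable one_ne_zero y]
      _ ≤ hsNorm L * hsNorm (fderiv ℝ f y) := sum_sum_mul_le_hsNorm_mul_hsNorm L _
      _ ≤ hsNorm L * M := mul_le_mul_of_nonneg_left (hbd y) (hsNorm_nonneg L)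
  have hself : hsNorm L * hsNorm L ≤ hsNorm L * M := by
    rw [← sq, sq_hsNorm]
    simpa [Fintype.sum_prod_type, fderiv_apply, hg, ← sq, L] using hpair
  rcases (hsNorm_nonneg L).eq_or_lt with hzero | hpos
  · exact hzero.symm.trans_le hM
  · exact le_of_mul_le_mul_left hself hpos

end Gradient

section Diffeomorphism

theorem exists_homeomorph_eq_add_of_nnnorm_fderiv_le {E : Type*} [NormedAddCommGroup E]
    [NormedSpace ℝ E] [CompleteSpace E] {g : E → E} {r : WithTop ℕ∞} (hr : r ≠ 0)
    (hg : ContDiff ℝ r g) {K : ℝ≥0} (hK : K < 1) (hbd : ∀ x, ‖fderiv ℝ g x‖₊ ≤ K) :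
    ∃ e : E ≃ₜ E, (∀ x, e x = x + g x) ∧ ContDiff ℝ r e.symm := by
  have hlip : LipschitzWith K g := lipschitzWith_of_nnnorm_fderiv_le (hg.differentiable hr) hbd
  have happrox : ApproximatesLinearOn (fun x => x + g x)
      (ContinuousLinearEquiv.refl ℝ E : E →L[ℝ] E) univ K := fun x _ y _ => by
    simpa [dist_eq_norm, add_sub_add_comm] using hlip.dist_le_mul x y
  have hK' : Subsingleton E ∨ K < ‖((ContinuousLinearEquiv.refl ℝ E).symm : E →L[ℝ] E)‖₊⁻¹ := by
    rcases subsingleton_or_nontrivial E with hE | hE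
    · exact .inl hE
    · have hid : ‖((ContinuousLinearEquiv.refl ℝ E).symm : E →L[ℝ] E)‖₊ = 1 :=
        ContinuousLinearMap.nnnorm_id
      exact .inr (by rwa [hid, inv_one])
  let e : E ≃ₜ E := happrox.toHomeomorph _ hK'
  refine ⟨e, fun _ => rfl, e.contDiff_symm (f₀' := fun x => ContinuousLinearEquiv.ofUnit
    (Units.oneSub (-fderiv ℝ g x) (by
      rw [norm_neg]; exact_mod_cast (hbd x).trans_lt hK))) (fun x => ?_)
    (contDiff_id.add hg)⟩
  refine ((hasFDerivAt_id x).add (hg.differentiable hr x).hasFDerivAt).congr_fderiv ?_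
  ext
  simp [ContinuousLinearEquiv.ofUnit]

variable {ι : Type*} [Fintype ι] [DecidableEq ι]

theorem norm_toLp_apply_le_hsNorm_mul {κ : Type*} [Fintype κ] (L : (ι → ℝ) →L[ℝ] (κ → ℝ))
    (v : EuclideanSpace ℝ ι) :
    ‖WithLp.toLp 2 (L (WithLp.ofLp v))‖ ≤ hsNorm L * ‖v‖ := by
  have hcoord : ∀ j, L (WithLp.ofLp v) j = ∑ i, L (Pi.single i 1) j * v i := fun j => by
    conv_lhs => rw [pi_eq_sum_univ' (WithLp.ofLp v), map_sum]
    simp [mul_comm]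
  refine le_of_sq_le_sq ?_ (mul_nonneg (hsNorm_nonneg L) (norm_nonneg v))
  simp only [mul_pow, sq_hsNorm, EuclideanSpace.real_norm_sq_eq, hcoord]
  rw [Finset.sum_comm, Finset.sum_mul]
  exact Finset.sum_le_sum fun j _ => Finset.sum_mul_sq_le_sq_mul_sq _ _ _

theorem exists_homeomorph_eq_add_of_hsNorm_fderiv_le {g : (ι → ℝ) → ι → ℝ} {r : WithTop ℕ∞}
    (hr : r ≠ 0) (hg : ContDiff ℝ r g) {K : ℝ} (hK : K < 1)
    (hbd : ∀ x, hsNorm (fderiv ℝ g x) ≤ K) :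
    ∃ e : (ι → ℝ) ≃ₜ (ι → ℝ), (∀ x, e x = x + g x) ∧ ContDiff ℝ r e.symm := by
  have hK₀ : 0 ≤ K := (hsNorm_nonneg _).trans (hbd 0)
  let T : EuclideanSpace ℝ ι ≃L[ℝ] (ι → ℝ) := EuclideanSpace.equiv ι ℝ
  have hderiv : ∀ y, HasFDerivAt (fun y => T.symm (g (T y)))
      ((T.symm : _ →L[ℝ] _) ∘L fderiv ℝ g (T y) ∘L (T : _ →L[ℝ] _)) y := fun y =>
    T.symm.hasFDerivAt.comp y ((hg.differentiable hr (T y)).hasFDerivAt.comp y T.hasFDerivAt)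
  have hnorm : ∀ y, ‖fderiv ℝ (fun y => T.symm (g (T y))) y‖₊ ≤ (⟨K, hK₀⟩ : ℝ≥0) := fun y => by
    rw [(hderiv y).fderiv]
    refine ContinuousLinearMap.opNorm_le_bound _ hK₀ fun v => ?_
    exact (norm_toLp_apply_le_hsNorm_mul _ v).trans
      (mul_le_mul_of_nonneg_right (hbd _) (norm_nonneg v))
  obtain ⟨e, he, hsymm⟩ := exists_homeomorph_eq_add_of_nnnorm_fderiv_le hr
    (T.symm.contDiff.comp (hg.comp T.contDiff)) (show (⟨K, hK₀⟩ : ℝ≥0) < 1 from hK) hnorm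
  refine ⟨T.symm.toHomeomorph.trans (e.trans T.toHomeomorph), fun x => ?_,
    T.contDiff.comp (hsymm.comp T.symm.contDiff)⟩
  simp [he]

end Diffeomorphism

theorem hsNorm_fderiv_eq_sqrt_sum_pd {n k : ℕ} {f : (Fin n → ℝ) → Fin k → ℝ} {x : Fin n → ℝ}
    (hf : DifferentiableAt ℝ f x) :
    hsNorm (fderiv ℝ f x) = √(∑ i, ∑ j, pd (fun y => f y j) i x ^ 2) := by
  have hpd : ∀ i j, pd (fun y => f y j) i x = fderiv ℝ f x (Pi.single i 1) j := fun i j => by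
    have hupdate : HasFDerivAt f (fderiv ℝ f x) (Function.update x i (x i)) := by
      simpa using hf.hasFDerivAt
    exact (hasDerivAt_pi.1 (hupdate.comp_hasDerivAt (x i) (hasDerivAt_update x i (x i))) j).deriv
  simp only [hpd, hsNorm]

theorem stmt8_general {ι : Type*} [Fintype ι] [DecidableEq ι] {m : (ι → ℤ) → ℝ}
    (hm : IsSubMarkovSymbol m) {f g : (ι → ℝ) → ι → ℝ} (hf : ContDiff ℝ 1 f)
    (hg : ContDiff ℝ 1 g)
    (hfg : ∀ j, IsFourierMultiplier m (fun y => f y j) fun y => g y j) {K : ℝ} (hK : K < 1)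
    (hbd : ∀ x, hsNorm (fderiv ℝ f x) ≤ K) :
    (∀ x, hsNorm (fderiv ℝ g x) ≤ ⨆ y, hsNorm (fderiv ℝ f y)) ∧
      (∀ x, hsNorm (fderiv ℝ g x) ≤ K) ∧
      Function.Bijective (fun x => x + g x) ∧
      ∃ ψ : (ι → ℝ) → ι → ℝ, Function.LeftInverse ψ (fun x => x + g x) ∧
        Function.RightInverse ψ (fun x => x + g x) ∧ ContDiff ℝ 1 ψ := by
  have hdiff : Differentiable ℝ g := hg.differentiable one_ne_zero
  have hsup : ∀ x, hsNorm (fderiv ℝ g x) ≤ ⨆ y, hsNorm (fderiv ℝ f y) := fun x =>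
    hm.hsNorm_fderiv_le hfg hf (hdiff x) (Real.iSup_nonneg fun _ => hsNorm_nonneg _)
      (le_ciSup ⟨K, forall_mem_range.2 hbd⟩)
  have hle : ∀ x, hsNorm (fderiv ℝ g x) ≤ K := fun x => (hsup x).trans (ciSup_le hbd)
  obtain ⟨e, he, hsymm⟩ := exists_homeomorph_eq_add_of_hsNorm_fderiv_le one_ne_zero hg hK hle
  rw [← funext he]
  exact ⟨hsup, hle, e.bijective, e.symm, e.left_inv, e.right_inv, hsymm⟩

/-- For θ : 𝕋ⁿ → ℝⁿ of class C¹ with Hilbert–Schmidt Jacobian norm ≤ 0.99, the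
deformation Θ(τ,x) = τ e^{−(1−τ)⟨D⟩}θ(x) (given here through its Fourier series
representation) satisfies the same Jacobian bound for every τ ∈ [0,1], and
consequently x ↦ x + Θ(τ,x) is a C¹ diffeomorphism. -/
theorem stmt8 (n : ℕ) (θ : (Fin n → ℝ) → (Fin n → ℝ))
    (a : (Fin n → ℤ) → Fin n → ℂ)
    (Θ : ℝ → (Fin n → ℝ) → (Fin n → ℝ))
    (hθreg : ContDiff ℝ 1 θ)
    (hθper : ∀ x (ξ : Fin n → ℤ), θ (x + fun i => 2 * Real.pi * (ξ i : ℝ)) = θ x)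
    (hθbd : ∀ x, Real.sqrt (∑ i, ∑ j, (pd (fun y => θ y j) i x) ^ 2) ≤ 0.99)
    (hθrep : ∀ x j, HasSum (fun ξ : Fin n → ℤ =>
      a ξ j * Complex.exp (Complex.I * ((∑ i, (ξ i : ℝ) * x i : ℝ) : ℂ))) ((θ x j : ℂ)))
    (hΘrep : ∀ τ ∈ Set.Icc (0:ℝ) 1, ∀ x j, HasSum (fun ξ : Fin n → ℤ =>
      ((τ : ℂ) *
        Complex.exp (-(((1 - τ) * Real.sqrt (1 + ∑ i, ((ξ i : ℝ)) ^ 2) : ℝ) : ℂ))) *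
        a ξ j * Complex.exp (Complex.I * ((∑ i, (ξ i : ℝ) * x i : ℝ) : ℂ)))
      ((Θ τ x j : ℂ)))
    (hΘreg : ∀ τ ∈ Set.Icc (0:ℝ) 1, ContDiff ℝ 1 (Θ τ)) :
    ∀ τ ∈ Set.Icc (0:ℝ) 1,
      (∀ x, Real.sqrt (∑ i, ∑ j, (pd (fun y => Θ τ y j) i x) ^ 2) ≤
        ⨆ x' : Fin n → ℝ, Real.sqrt (∑ i, ∑ j, (pd (fun y => θ y j) i x') ^ 2)) ∧
      (∀ x, Real.sqrt (∑ i, ∑ j, (pd (fun y => Θ τ y j) i x) ^ 2) ≤ 0.99) ∧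
      Function.Bijective (fun x => x + Θ τ x) ∧
      ∃ ψ : (Fin n → ℝ) → (Fin n → ℝ),
        Function.LeftInverse ψ (fun x => x + Θ τ x) ∧
        Function.RightInverse ψ (fun x => x + Θ τ x) ∧
        ContDiff ℝ 1 ψ := by
  intro τ hτ
  have hmul : ∀ j, IsFourierMultiplier
      (fun ξ => τ * Real.exp (-((1 - τ) * japaneseBracket ξ))) (fun y => θ y j)
      fun y => Θ τ y j := fun j => by
    refine ⟨fun ξ => a ξ j, fun x => ?_, fun x => ?_⟩
    · simpa only [torusChar, phase_apply] using hθrep x j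
    · simpa only [torusChar, phase_apply, japaneseBracket, Complex.ofReal_mul, Complex.ofReal_exp,
        Complex.ofReal_neg] using hΘrep τ hτ x j
  have hsymbol := isSubMarkovSymbol_mul_exp_neg_japaneseBracket (ι := Fin n) hτ (sub_nonneg.2 hτ.2)
  simp only [← hsNorm_fderiv_eq_sqrt_sum_pd (hθreg.differentiable one_ne_zero _),
    ← hsNorm_fderiv_eq_sqrt_sum_pd ((hΘreg τ hτ).differentiable one_ne_zero _)] at hθbd ⊢
  exact stmt8_general hsymbol hθreg (hΘreg τ hτ) hmul (by norm_num) hθbd
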